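/- arXiv:1703.03545 — 2 statements merged into one kernel-verified Lean document; each statement's English description precedes it below -/
import Mathlib

section
/- Let k be a field of characteristic 2 and r ≥ 3. Let the symmetric group S_r act on the quotient ring R = k[x_1,…,x_r]/(x_1+⋯+x_r) by permuting the variables. Then the ring of S_r-invariants of R is the polynomial ring k[c_2,…,c_r], where c_i denotes the image of the i-th elementary symmetric polynomial in x_1,…,x_r. -/
open MvPolynomial

/-!
Reducing powers of `T` modulo `∏ (T - xᵢ)`, whose coefficients are symmetric, shows that the
antisymmetrization of a polynomial is the Vandermonde determinant `Δ` times a symmetric polynomial;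
the antisymmetrization of the staircase monomial `∏ xᵢ ^ i` is `Δ` itself. If `f` is invariant
modulo `e₁ = x₁ + ⋯ + x_r`, antisymmetrizing `(∏ xᵢ ^ i) * f` therefore yields `Δ * h ≡ Δ * f` with
`h` symmetric. For `r ≥ 3` each factor `xⱼ - xᵢ` of `Δ` avoids some variable, and eliminating that
variable by means of `e₁` shows that the factor is regular modulo `e₁`; so `f ≡ h`. Algebraic
independence holds because a symmetric multiple of `e₁` is `e₁` times a symmetric polynomial.
-/

namespace InvariantsModSum

section Elimination

variable {σ R : Type*} [CommRing R] {i : σ} {f g : MvPolynomial σ R}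

lemma X_mem_supported_compl {j : σ} (h : j ≠ i) : X j ∈ supported R {i}ᶜ :=
  Algebra.subset_adjoin (Set.mem_image_of_mem X h)

open scoped Classical in
/-- The substitution of `g` for the variable `i`. When `g` does not involve `i`, this eliminates
`i` and realizes the quotient by `X i - g`. -/
noncomputable def substVar (i : σ) (g : MvPolynomial σ R) :
    MvPolynomial σ R →ₐ[R] MvPolynomial σ R :=
  aeval (Function.update X i g)

lemma substVar_X_self : substVar i g (X i) = g := by
  simp [substVar]

lemma substVar_X_of_ne {j : σ} (h : j ≠ i) : substVar i g (X j) = X j := by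
  simp [substVar, h]

lemma substVar_of_mem_supported (hf : f ∈ supported R {i}ᶜ) : substVar i g f = f := by
  induction hf using Algebra.adjoin_induction with
  | mem _ h => obtain ⟨j, hj, rfl⟩ := h; exact substVar_X_of_ne hj
  | algebraMap a => exact AlgHom.commutes _ a
  | add _ _ _ _ h₁ h₂ => rw [map_add, h₁, h₂]
  | mul _ _ _ _ h₁ h₂ => rw [map_mul, h₁, h₂]

lemma X_sub_dvd_sub_substVar (i : σ) (f g : MvPolynomial σ R) :
    X i - g ∣ f - substVar i g f := by
  let π := Ideal.Quotient.mkₐ R (Ideal.span {X i - g})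
  have hπ : π = π.comp (substVar i g) := by
    ext j
    obtain rfl | hj := eq_or_ne j i
    · rw [AlgHom.comp_apply, substVar_X_self]
      exact Ideal.Quotient.eq.mpr (Ideal.mem_span_singleton_self _)
    · rw [AlgHom.comp_apply, substVar_X_of_ne hj]
  rw [← Ideal.mem_span_singleton, ← Ideal.Quotient.eq]
  exact DFunLike.congr_fun hπ f

lemma X_sub_dvd_iff (hg : g ∈ supported R {i}ᶜ) : X i - g ∣ f ↔ substVar i g f = 0 := by
  constructor
  · rintro ⟨q, rfl⟩
    rw [map_mul, map_sub, substVar_X_self, substVar_of_mem_supported hg, sub_self, zero_mul]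
  · intro h
    simpa only [h, sub_zero] using X_sub_dvd_sub_substVar i f g

lemma isRegular_X_sub (hg : g ∈ supported R {i}ᶜ) : IsRegular (X i - g) := by
  have hinv : (substVar i (X i - g)).comp (substVar i (X i + g)) = AlgHom.id R _ := by
    ext1 j
    obtain rfl | hj := eq_or_ne j i
    · simp only [AlgHom.comp_apply, substVar_X_self, map_add, substVar_of_mem_supported hg,
        sub_add_cancel, AlgHom.id_apply]
    · simp only [AlgHom.comp_apply, substVar_X_of_ne hj, AlgHom.id_apply]
  have hX : substVar i (X i + g) (X i - g) = X i := by
    rw [map_sub, substVar_X_self, substVar_of_mem_supported hg, add_sub_cancel_right]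
  have hinj : Function.Injective (substVar i (X i + g)) :=
    Function.LeftInverse.injective (g := substVar i (X i - g)) fun f => by
      rw [← AlgHom.comp_apply, hinv, AlgHom.id_apply]
  rw [isRegular_iff_mem_nonZeroDivisors]
  apply mem_nonZeroDivisors_of_injective hinj
  rw [hX, ← isRegular_iff_mem_nonZeroDivisors]
  exact isRegular_X

lemma isRegular_mk_span_X_sub (hg : g ∈ supported R {i}ᶜ) (hf : f ∈ supported R {i}ᶜ)
    (hreg : IsRegular f) : IsRegular (Ideal.Quotient.mk (Ideal.span {X i - g}) f) := by
  rw [← isLeftRegular_iff_isRegular, isLeftRegular_iff_right_eq_zero_of_mul]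
  intro y hy
  obtain ⟨q, rfl⟩ := Ideal.Quotient.mk_surjective y
  rw [← map_mul, Ideal.Quotient.eq_zero_iff_dvd, X_sub_dvd_iff hg, map_mul,
    substVar_of_mem_supported hf] at hy
  rw [Ideal.Quotient.eq_zero_iff_dvd, X_sub_dvd_iff hg]
  exact hreg.left.mul_left_eq_zero_iff.mp hy

lemma sum_X_eq_X_sub [Fintype σ] [DecidableEq σ] (i : σ) :
    ∑ j, X j = X i - (-∑ j ∈ Finset.univ.erase i, X j : MvPolynomial σ R) := by
  rw [sub_neg_eq_add, Finset.add_sum_erase _ _ (Finset.mem_univ i)]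

lemma neg_sum_erase_X_mem_supported [Fintype σ] [DecidableEq σ] (i : σ) :
    -∑ j ∈ Finset.univ.erase i, X j ∈ supported R {i}ᶜ :=
  neg_mem <| sum_mem fun _ hj => X_mem_supported_compl (Finset.ne_of_mem_erase hj)

lemma isRegular_sum_X [Fintype σ] [Nonempty σ] :
    IsRegular (∑ j, X j : MvPolynomial σ R) := by
  classical
  rw [sum_X_eq_X_sub (Classical.arbitrary σ)]
  exact isRegular_X_sub (neg_sum_erase_X_mem_supported _)

lemma isRegular_mk_X_sub_X [Fintype σ] {j l m : σ} (hjl : j ≠ l) (hjm : j ≠ m) (hlm : l ≠ m) :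
    IsRegular (Ideal.Quotient.mk (Ideal.span {∑ i, X i}) (X j - X l : MvPolynomial σ R)) := by
  classical
  rw [sum_X_eq_X_sub m]
  exact isRegular_mk_span_X_sub (neg_sum_erase_X_mem_supported m)
    (sub_mem (X_mem_supported_compl hjm) (X_mem_supported_compl hlm))
    (isRegular_X_sub (X_mem_supported_compl hjl.symm))

end Elimination

section Vandermonde

variable {R : Type*} [CommRing R] {n : ℕ}

lemma isRegular_mk_det_vandermonde_X (hn : 3 ≤ n) :
    IsRegular (Ideal.Quotient.mk (Ideal.span {∑ i, X i})
      (Matrix.vandermonde (X : Fin n → MvPolynomial (Fin n) R)).det) := by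
  simp only [Matrix.det_vandermonde, map_prod]
  refine IsRegular.prod fun i _ => IsRegular.prod fun j hj => ?_
  obtain ⟨m, hmi, hmj⟩ : ∃ m : Fin n, m ≠ i ∧ m ≠ j :=
    ENat.exists_ne_ne_of_three_le (by simpa using hn) i j
  exact isRegular_mk_X_sub_X (Finset.mem_Ioi.mp hj).ne' hmj.symm hmi.symm

/-- The matrix of coefficients of the remainders of `T ^ a j` modulo `∏ l, (T - v l)`. -/
noncomputable def powRemainderMatrix (v : Fin n → R) (a : Fin n → ℕ) : Matrix (Fin n) (Fin n) R :=
  .of fun i j =>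
    (Polynomial.X ^ a j %ₘ ∏ l, (Polynomial.X - Polynomial.C (v l)) : Polynomial R).coeff i

lemma vandermonde_mul_powRemainderMatrix (v : Fin n → R) (a : Fin n → ℕ) :
    Matrix.vandermonde v * powRemainderMatrix v a = .of fun i j => v i ^ a j := by
  nontriviality R
  ext i j
  let P : Polynomial R := ∏ l, (Polynomial.X - Polynomial.C (v l))
  have hP : P.Monic := Polynomial.monic_prod_X_sub_C v Finset.univ
  have hroot : P.IsRoot (v i) := by
    rw [Polynomial.IsRoot, Polynomial.eval_prod]
    exact Finset.prod_eq_zero (Finset.mem_univ i) (by simp)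
  have hdeg : (Polynomial.X ^ a j %ₘ P).degree < n := by
    simpa [P, Polynomial.degree_prod_of_monic, Polynomial.monic_X_sub_C] using
      Polynomial.degree_modByMonic_lt (Polynomial.X ^ a j) hP
  calc (Matrix.vandermonde v * powRemainderMatrix v a) i j
      = ∑ l : Fin n, v i ^ (l : ℕ) * (Polynomial.X ^ a j %ₘ P).coeff l := rfl
    _ = (Polynomial.X ^ a j %ₘ P).eval (v i) := by
      rw [Polynomial.eval_eq_sum,
        ← Polynomial.sum_fin _ (by simp only [zero_mul, implies_true]) hdeg]
      simp only [mul_comm]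
    _ = v i ^ a j := by
      simpa only [Polynomial.eval₂_id, Polynomial.eval_pow, Polynomial.eval_X] using
        Polynomial.eval₂_modByMonic_eq_self_of_root (f := RingHom.id R) (p := Polynomial.X ^ a j)
          hroot

lemma map_powRemainderMatrix {S F : Type*} [CommRing S] [FunLike F R S] [RingHomClass F R S]
    (φ : F) (v : Fin n → R) (a : Fin n → ℕ) :
    (powRemainderMatrix v a).map φ = powRemainderMatrix (φ ∘ v) a := by
  ext i j
  simp only [powRemainderMatrix, Matrix.map_apply, Matrix.of_apply]
  rw [← RingHom.coe_coe φ, ← Polynomial.coeff_map,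
    Polynomial.map_modByMonic _ (Polynomial.monic_prod_X_sub_C v _)]
  simp [Polynomial.map_prod]

lemma powRemainderMatrix_comp_perm (v : Fin n → R) (a : Fin n → ℕ) (w : Equiv.Perm (Fin n)) :
    powRemainderMatrix (v ∘ w) a = powRemainderMatrix v a := by
  unfold powRemainderMatrix
  simp only [Function.comp_apply, Equiv.prod_comp w fun l => Polynomial.X - Polynomial.C (v l)]

lemma isSymmetric_det_powRemainderMatrix_X (a : Fin n → ℕ) :
    (powRemainderMatrix (X : Fin n → MvPolynomial (Fin n) R) a).det.IsSymmetric := by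
  intro w
  have hw : (powRemainderMatrix X a).map (rename w) =
      powRemainderMatrix (X : Fin n → MvPolynomial (Fin n) R) a := calc
    _ = powRemainderMatrix (rename w ∘ X) a := map_powRemainderMatrix (rename (R := R) w) X a
    _ = powRemainderMatrix (X ∘ w) a := by
      congr 1
      exact funext (rename_X w)
    _ = _ := powRemainderMatrix_comp_perm X a w
  rw [AlgHom.map_det, AlgHom.mapMatrix_apply, hw]

end Vandermonde

section Antisymmetrization

variable {R : Type*} [CommRing R] {n : ℕ}

/-- The antisymmetrization `∑ w, sign w • w f` of a polynomial `f`, not divided by `n!`. -/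
noncomputable def antisymmetrize (f : MvPolynomial (Fin n) R) : MvPolynomial (Fin n) R :=
  ∑ w : Equiv.Perm (Fin n), Equiv.Perm.sign w • rename w f

lemma antisymmetrize_add (f g : MvPolynomial (Fin n) R) :
    antisymmetrize (f + g) = antisymmetrize f + antisymmetrize g := by
  simp only [antisymmetrize, map_add, smul_add, Finset.sum_add_distrib]

lemma antisymmetrize_C_mul (a : R) (f : MvPolynomial (Fin n) R) :
    antisymmetrize (C a * f) = C a * antisymmetrize f := by
  simp only [antisymmetrize, map_mul, rename_C, mul_smul_comm, Finset.mul_sum]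

lemma antisymmetrize_prod_X_pow (a : Fin n → ℕ) :
    antisymmetrize (∏ i, X i ^ a i : MvPolynomial (Fin n) R) =
      (Matrix.of fun i j => (X i : MvPolynomial (Fin n) R) ^ a j).det := by
  simp only [antisymmetrize, Matrix.det_apply, map_prod, map_pow, rename_X, Matrix.of_apply]

lemma antisymmetrize_staircase :
    antisymmetrize (∏ i : Fin n, X i ^ (i : ℕ) : MvPolynomial (Fin n) R) =
      (Matrix.vandermonde X).det :=
  antisymmetrize_prod_X_pow _

lemma exists_isSymmetric_antisymmetrize_eq (f : MvPolynomial (Fin n) R) :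
    ∃ h : MvPolynomial (Fin n) R, h.IsSymmetric ∧
      antisymmetrize f = (Matrix.vandermonde X).det * h := by
  induction f using MvPolynomial.induction_on' with
  | monomial a c =>
    refine ⟨C c * (powRemainderMatrix X a).det,
      (IsSymmetric.C c).mul (isSymmetric_det_powRemainderMatrix_X a), ?_⟩
    rw [monomial_eq, Finsupp.prod_fintype _ _ fun _ => pow_zero _, antisymmetrize_C_mul,
      antisymmetrize_prod_X_pow, ← vandermonde_mul_powRemainderMatrix, Matrix.det_mul,
      mul_left_comm]
  | add p q hp hq =>
    obtain ⟨h₁, hs₁, e₁⟩ := hp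
    obtain ⟨h₂, hs₂, e₂⟩ := hq
    exact ⟨h₁ + h₂, hs₁.add hs₂, by rw [antisymmetrize_add, e₁, e₂, mul_add]⟩

lemma mk_antisymmetrize_mul {I : Ideal (MvPolynomial (Fin n) R)} (g : MvPolynomial (Fin n) R)
    {f : MvPolynomial (Fin n) R}
    (hf : ∀ w : Equiv.Perm (Fin n), Ideal.Quotient.mk I (rename w f) = Ideal.Quotient.mk I f) :
    Ideal.Quotient.mk I (antisymmetrize (g * f)) = Ideal.Quotient.mk I (antisymmetrize g * f) := by
  simp only [antisymmetrize, Finset.sum_mul, map_sum, smul_mul_assoc, Units.smul_def, map_zsmul,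
    map_mul, hf]

lemma exists_isSymmetric_mk_eq {I : Ideal (MvPolynomial (Fin n) R)}
    (hI : IsRegular (Ideal.Quotient.mk I (Matrix.vandermonde X).det))
    {f : MvPolynomial (Fin n) R}
    (hf : ∀ w : Equiv.Perm (Fin n), Ideal.Quotient.mk I (rename w f) = Ideal.Quotient.mk I f) :
    ∃ h : MvPolynomial (Fin n) R,
      h.IsSymmetric ∧ Ideal.Quotient.mk I h = Ideal.Quotient.mk I f := by
  obtain ⟨h, hs, hh⟩ := exists_isSymmetric_antisymmetrize_eq ((∏ i : Fin n, X i ^ (i : ℕ)) * f)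
  refine ⟨h, hs, hI.left ?_⟩
  have := mk_antisymmetrize_mul (∏ i : Fin n, X i ^ (i : ℕ)) hf
  rwa [hh, antisymmetrize_staircase, map_mul, map_mul] at this

end Antisymmetrization

section Elementary

variable {R : Type*} [CommRing R] {m : ℕ}

lemma adjoin_range_esymm (n : ℕ) :
    Algebra.adjoin R (Set.range fun i : Fin n => esymm (Fin n) R (i + 1)) =
      symmetricSubalgebra (Fin n) R := by
  rw [Algebra.adjoin_range_eq_range_aeval]
  ext f
  constructor
  · rintro ⟨p, rfl⟩
    have := (esymmAlgHom (Fin n) R n p).2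
    rwa [esymmAlgHom_apply] at this
  · intro hf
    obtain ⟨p, hp⟩ := esymmAlgHom_fin_surjective R le_rfl ⟨f, hf⟩
    exact ⟨p, (esymmAlgHom_apply p).symm.trans (congrArg Subtype.val hp)⟩

lemma adjoin_range_mk_esymm {I : Ideal (MvPolynomial (Fin (m + 1)) R)} (hI : ∑ i, X i ∈ I) :
    Algebra.adjoin R (Set.range fun j : Fin m =>
        Ideal.Quotient.mk I (esymm (Fin (m + 1)) R (j + 2))) =
      (symmetricSubalgebra (Fin (m + 1)) R).map (Ideal.Quotient.mkₐ R I) := by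
  have h0 : Ideal.Quotient.mk I (esymm (Fin (m + 1)) R 1) = 0 := by
    rwa [esymm_one, Ideal.Quotient.eq_zero_iff_mem]
  rw [← adjoin_range_esymm, AlgHom.map_adjoin, ← Set.range_comp, Fin.range_fin_succ]
  simp only [Function.comp_apply, Fin.tail_def, Ideal.Quotient.mkₐ_eq_mk, Fin.val_zero, zero_add,
    h0, Algebra.adjoin_insert_zero, Fin.val_succ, add_assoc, one_add_one_eq_two]

lemma isSymmetric_of_mul {σ : Type*} {p q : MvPolynomial σ R} (hp : p.IsSymmetric)
    (hreg : IsLeftRegular p) (hpq : (p * q).IsSymmetric) : q.IsSymmetric := fun w =>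
  hreg <| by simpa only [map_mul, hp w] using hpq w

lemma eq_zero_of_X_zero_dvd_rename_succ {p : MvPolynomial (Fin m) R}
    (h : X 0 ∣ rename Fin.succ p) : p = 0 := by
  let ε : MvPolynomial (Fin (m + 1)) R →ₐ[R] MvPolynomial (Fin m) R := aeval (Fin.cons 0 X)
  have hp : ε (rename Fin.succ p) = p := by
    rw [aeval_rename, show (Fin.cons 0 X ∘ Fin.succ : Fin m → MvPolynomial (Fin m) R) = X from rfl,
      aeval_X_left_apply]
  obtain ⟨q, hq⟩ := h
  rw [← hp, hq, map_mul, aeval_X, Fin.cons_zero, zero_mul]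

lemma sum_X_dvd_aeval_esymm_iff {p : MvPolynomial (Fin m) R} :
    ∑ i, X i ∣ aeval (fun j : Fin m => esymm (Fin (m + 1)) R (j + 2)) p ↔ p = 0 := by
  refine ⟨fun ⟨q, hq⟩ => ?_, fun h => by simp [h]⟩
  let Φ := esymmAlgHom (Fin (m + 1)) R (m + 1)
  have hX : (Φ (X 0) : MvPolynomial (Fin (m + 1)) R) = ∑ i, X i := by
    rw [esymmAlgHom_apply, aeval_X, Fin.val_zero, zero_add, esymm_one]
  have hp : (Φ (rename Fin.succ p) : MvPolynomial (Fin (m + 1)) R) = (∑ i, X i) * q := by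
    rw [esymmAlgHom_apply, aeval_rename, ← hq]
    rfl
  have hq_symm : q.IsSymmetric :=
    isSymmetric_of_mul (hX ▸ (Φ (X 0)).2) isRegular_sum_X.left
      (hp ▸ (Φ (rename Fin.succ p)).2)
  obtain ⟨Q, hQ⟩ := esymmAlgHom_fin_surjective R le_rfl ⟨q, hq_symm⟩
  apply eq_zero_of_X_zero_dvd_rename_succ
  refine ⟨Q, esymmAlgHom_fin_injective R le_rfl (Subtype.ext ?_)⟩
  rw [map_mul, hQ, hp, MulMemClass.coe_mul, hX]

lemma algebraicIndependent_mk_esymm :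
    AlgebraicIndependent R fun j : Fin m =>
      Ideal.Quotient.mk (Ideal.span {∑ i, X i}) (esymm (Fin (m + 1)) R (j + 2)) := by
  rw [algebraicIndependent_iff]
  intro p hp
  rw [← sum_X_dvd_aeval_esymm_iff, ← Ideal.Quotient.eq_zero_iff_dvd, ← Ideal.Quotient.mkₐ_eq_mk R,
    comp_aeval_apply]
  exact hp

end Elementary

end InvariantsModSum

theorem invariants_of_perm_action_on_quotient_general
    {R : Type*} [CommRing R] {r : ℕ} (hr : 3 ≤ r)
    {I : Ideal (MvPolynomial (Fin r) R)}
    (hI : I = Ideal.span ({∑ i : Fin r, X i} : Set (MvPolynomial (Fin r) R)))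
    {φ : Equiv.Perm (Fin r) → ((MvPolynomial (Fin r) R ⧸ I) →ₐ[R] (MvPolynomial (Fin r) R ⧸ I))}
    (hφ : ∀ σ f, φ σ (Ideal.Quotient.mk I f) = Ideal.Quotient.mk I (rename σ f))
    {c : Fin (r - 1) → (MvPolynomial (Fin r) R ⧸ I)}
    (hc : ∀ j, c j = Ideal.Quotient.mk I (esymm (Fin r) R ((j : ℕ) + 2))) :
    (∀ y : MvPolynomial (Fin r) R ⧸ I,
        (∀ σ : Equiv.Perm (Fin r), φ σ y = y) ↔ y ∈ Algebra.adjoin R (Set.range c)) ∧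
      AlgebraicIndependent R c := by
  obtain ⟨m, rfl⟩ : ∃ m, r = m + 1 := ⟨r - 1, by omega⟩
  obtain rfl : c = _ := funext hc
  subst hI
  refine ⟨fun y => ?_, InvariantsModSum.algebraicIndependent_mk_esymm⟩
  have hadjoin := InvariantsModSum.adjoin_range_mk_esymm
    (Ideal.mem_span_singleton_self (∑ i, X i : MvPolynomial (Fin (m + 1)) R))
  refine Iff.trans ⟨fun hy => ?_, ?_⟩ (SetLike.ext_iff.mp hadjoin y).symm
  · obtain ⟨f, rfl⟩ := Ideal.Quotient.mk_surjective y
    exact InvariantsModSum.exists_isSymmetric_mk_eq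
      (InvariantsModSum.isRegular_mk_det_vandermonde_X hr) fun w => (hφ w f).symm.trans (hy w)
  · rintro ⟨h, hs, rfl⟩ w
    exact (hφ w h).trans (congrArg _ (hs w))

/-- Let `k` be a field of characteristic 2 and `r ≥ 3`. Let `S_r`
act on `R = k[x₁,…,x_r]/(x₁+⋯+x_r)` by permuting the variables (the action on the
quotient is encoded by any family `φ` of algebra maps compatible with `rename`).
Then the ring of `S_r`-invariants of `R` is the polynomial ring `k[c₂,…,c_r]`,
where `c_i` is the image of the `i`-th elementary symmetric polynomial:
invariants equal the subalgebra generated by the `c_i`, and the `c_i` are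
algebraically independent over `k`. -/
theorem invariants_of_perm_action_on_quotient
    (k : Type*) [Field k] [CharP k 2] (r : ℕ) (hr : 3 ≤ r)
    (I : Ideal (MvPolynomial (Fin r) k))
    (hI : I = Ideal.span ({∑ i : Fin r, X i} : Set (MvPolynomial (Fin r) k)))
    (φ : Equiv.Perm (Fin r) → ((MvPolynomial (Fin r) k ⧸ I) →ₐ[k] (MvPolynomial (Fin r) k ⧸ I)))
    (hφ : ∀ σ f, φ σ (Ideal.Quotient.mk I f) = Ideal.Quotient.mk I (rename σ f))
    (c : Fin (r - 1) → (MvPolynomial (Fin r) k ⧸ I))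
    (hc : ∀ j, c j = Ideal.Quotient.mk I (esymm (Fin r) k ((j : ℕ) + 2))) :
    (∀ y : MvPolynomial (Fin r) k ⧸ I,
        (∀ σ : Equiv.Perm (Fin r), φ σ y = y) ↔ y ∈ Algebra.adjoin k (Set.range c)) ∧
      AlgebraicIndependent k c := by
  exact invariants_of_perm_action_on_quotient_general hr hI hφ hc
end

section
/- Let k be a field of characteristic 2 and r ≥ 1. In the ring S = k[x_1,…,x_r,A]/(x_1+⋯+x_r), let the group E_j = (Z/2)^j (1 ≤ j ≤ r−1) act with generator ε_i fixing all x_m and sending A to A − x_i. Then the ring of E_j-invariants of S is k[x_1,…,x_r, η_j]/(x_1+⋯+x_r), where η_j = ∏_{I ⊆ {1,…,j}} (A − ∑_{i∈I} x_i) is the product over all 2^j subsets I. -/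
open MvPolynomial Finset

/-!
Let `V` be a finite additive subgroup of a ring `R` whose nonzero elements are not zero divisors.
A polynomial `p` over `R` invariant under all translations `X ↦ X - v` takes the value `p(0)` at
every point of `V`, so `η = ∏ (X - v)` divides `p - p(0)`; the quotient is again invariant because
`η` is monic and invariant. Induction on the degree puts `p` in `R[η]`.

In characteristic 2 the additive group generated by `x₁, …, x_j` consists of the subset sums of the
`xᵢ`. Eliminating one of the variables not among `x₁, …, x_j` identifies `k[x, A] / (∑ xᵢ)` with the
polynomial ring in `A` over a polynomial ring `R` in which a nonempty subset sum of these `xᵢ` is a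
linear form with unit coefficients, hence not a zero divisor, even over a base ring with zero
divisors.
-/

open scoped Polynomial nonZeroDivisors

section Translations

variable {R : Type*} [CommRing R]

theorem prod_X_sub_C_dvd_of_eval_eq_zero {ι : Type*} {a : ι → R} (s : Finset ι)
    (ha : (s : Set ι).Pairwise fun i j ↦ a i - a j ∈ R⁰) {p : R[X]}
    (hp : ∀ i ∈ s, p.eval (a i) = 0) :
    ∏ i ∈ s, (Polynomial.X - Polynomial.C (a i)) ∣ p := by
  classical
  induction s using Finset.induction_on with
  | empty => simp
  | insert i s hi ih =>
    rw [coe_insert] at ha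
    obtain ⟨q, rfl⟩ := ih (ha.mono (Set.subset_insert _ _)) fun j hj ↦ hp j (mem_insert_of_mem hj)
    have hreg : ∏ j ∈ s, (a i - a j) ∈ R⁰ := prod_mem fun j hj ↦
      ha (Set.mem_insert _ _) (Set.mem_insert_of_mem _ hj) (ne_of_mem_of_not_mem hj hi).symm
    have hq : q.eval (a i) = 0 := by
      have hpi := hp i (mem_insert_self i s)
      simp only [Polynomial.eval_mul, Polynomial.eval_prod, Polynomial.eval_sub,
        Polynomial.eval_X, Polynomial.eval_C] at hpi
      exact (mul_left_mem_nonZeroDivisors_eq_zero_iff hreg).mp hpi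
    rw [prod_insert hi, mul_comm]
    exact mul_dvd_mul_left _ (Polynomial.dvd_iff_isRoot.mpr hq)

/-- The monic polynomial whose roots are the elements of a finite additive subgroup `V`, i.e. the
product of the orbit of the indeterminate under the translations `X ↦ X - v`, `v ∈ V`. -/
noncomputable def vanishingPolynomial (V : AddSubgroup R) [Fintype V] : R[X] :=
  ∏ v : V, (Polynomial.X - Polynomial.C (v : R))

namespace vanishingPolynomial

variable (V : AddSubgroup R) [Fintype V]

theorem monic : (vanishingPolynomial V).Monic :=
  Polynomial.monic_prod_X_sub_C _ _

theorem natDegree_pos [Nontrivial R] : 0 < (vanishingPolynomial V).natDegree := by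
  rw [vanishingPolynomial, Polynomial.natDegree_finsetProd_X_sub_C_eq_card]
  exact Fintype.card_pos

theorem comp_X_sub_C {v : R} (hv : v ∈ V) :
    (vanishingPolynomial V).comp (Polynomial.X - Polynomial.C v) = vanishingPolynomial V := by
  rw [vanishingPolynomial, Polynomial.prod_comp]
  refine Fintype.prod_equiv (Equiv.addRight ⟨v, hv⟩) _ _ fun w ↦ ?_
  simp [sub_sub, add_comm]

variable {V}

theorem dvd_sub_C_eval_zero (hV : ∀ v ∈ V, v ≠ 0 → v ∈ R⁰) {p : R[X]}
    (hp : ∀ v ∈ V, p.comp (Polynomial.X - Polynomial.C v) = p) :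
    vanishingPolynomial V ∣ p - Polynomial.C (p.eval 0) := by
  refine prod_X_sub_C_dvd_of_eval_eq_zero univ
    (fun v _ w _ hvw ↦ hV _ (sub_mem v.2 w.2) (sub_ne_zero.mpr (Subtype.coe_ne_coe.mpr hvw)))
    fun v _ ↦ ?_
  have hpv : p.eval (v : R) = p.eval 0 := by
    conv_lhs => rw [← hp v v.2]
    simp
  simp [hpv]

theorem mem_adjoin_of_forall_comp_eq (hV : ∀ v ∈ V, v ≠ 0 → v ∈ R⁰) {p : R[X]}
    (hp : ∀ v ∈ V, p.comp (Polynomial.X - Polynomial.C v) = p) :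
    p ∈ Algebra.adjoin R {vanishingPolynomial V} := by
  nontriviality R
  induction hd : p.natDegree using Nat.strong_induction_on generalizing p with
  | _ d ih =>
    obtain ⟨q, hq⟩ := dvd_sub_C_eval_zero hV hp
    have hpq : p = Polynomial.C (p.eval 0) + vanishingPolynomial V * q := by
      rw [← hq, add_sub_cancel]
    have hq_inv : ∀ v ∈ V, q.comp (Polynomial.X - Polynomial.C v) = q := fun v hv ↦ by
      refine (monic V).isRegular.left ?_
      calc vanishingPolynomial V * q.comp (Polynomial.X - Polynomial.C v)
          = (p - Polynomial.C (p.eval 0)).comp (Polynomial.X - Polynomial.C v) := by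
            rw [hq, Polynomial.mul_comp, comp_X_sub_C V hv]
        _ = vanishingPolynomial V * q := by
            rw [Polynomial.sub_comp, Polynomial.C_comp, hp v hv, hq]
    have hq_mem : q ∈ Algebra.adjoin R {vanishingPolynomial V} := by
      rcases eq_or_ne q 0 with rfl | hq0
      · exact zero_mem _
      have hdeg : p.natDegree = (vanishingPolynomial V).natDegree + q.natDegree := by
        rw [← (monic V).natDegree_mul' hq0, ← hq, Polynomial.natDegree_sub_C]
      exact ih q.natDegree (by have := natDegree_pos V; omega) hq_inv rfl
    rw [hpq]
    exact add_mem (Subalgebra.algebraMap_mem _ _)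
      (mul_mem (Algebra.self_mem_adjoin_singleton _ _) hq_mem)

theorem forall_comp_eq_iff_mem_adjoin (hV : ∀ v ∈ V, v ≠ 0 → v ∈ R⁰) {p : R[X]} :
    (∀ v ∈ V, p.comp (Polynomial.X - Polynomial.C v) = p) ↔
      p ∈ Algebra.adjoin R {vanishingPolynomial V} := by
  refine ⟨mem_adjoin_of_forall_comp_eq hV, fun hp v hv ↦ ?_⟩
  have hle : Algebra.adjoin R {vanishingPolynomial V} ≤
      AlgHom.equalizer (Polynomial.aeval (Polynomial.X - Polynomial.C v)) (AlgHom.id R R[X]) :=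
    Algebra.adjoin_singleton_le (comp_X_sub_C V hv)
  exact hle hp

end vanishingPolynomial

theorem forall_mem_closure_comp_eq_iff {s : Set R} {p : R[X]} :
    (∀ v ∈ AddSubgroup.closure s, p.comp (Polynomial.X - Polynomial.C v) = p) ↔
      ∀ v ∈ s, p.comp (Polynomial.X - Polynomial.C v) = p := by
  refine ⟨fun h v hv ↦ h v (AddSubgroup.subset_closure hv), fun h v hv ↦ ?_⟩
  have comp_comp (a b : R) : (p.comp (Polynomial.X - Polynomial.C a)).comp
      (Polynomial.X - Polynomial.C b) = p.comp (Polynomial.X - Polynomial.C (a + b)) := by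
    simp [Polynomial.comp_assoc, sub_sub, add_comm]
  induction hv using AddSubgroup.closure_induction with
  | mem v hv => exact h v hv
  | zero => simp
  | add v w _ _ hv hw => rw [← comp_comp, hv, hw]
  | neg v _ hv => simpa [hv] using comp_comp v (-v)

end Translations

section SubsetSums

variable {κ R : Type*} [CommRing R] [CharP R 2]

theorem sum_symmDiff_of_charP_two [DecidableEq κ] (x : κ → R) (s t : Finset κ) :
    ∑ i ∈ symmDiff s t, x i = ∑ i ∈ s, x i + ∑ i ∈ t, x i := by
  have h : Disjoint (s \ t) (t \ s) := disjoint_sdiff_sdiff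
  rw [symmDiff_def, sup_eq_union, sum_union h, ← sum_inter_add_sum_sdiff s t,
    ← sum_inter_add_sum_sdiff t s, inter_comm t s]
  linear_combination -CharTwo.add_self_eq_zero (∑ i ∈ s ∩ t, x i)

theorem mem_closure_range_iff_exists_sum {x : κ → R} {v : R} :
    v ∈ AddSubgroup.closure (Set.range x) ↔ ∃ s : Finset κ, ∑ i ∈ s, x i = v := by
  classical
  constructor
  · intro hv
    induction hv using AddSubgroup.closure_induction with
    | mem v hv => obtain ⟨i, rfl⟩ := hv; exact ⟨{i}, sum_singleton x i⟩
    | zero => exact ⟨∅, sum_empty⟩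
    | add v w _ _ hv hw =>
      obtain ⟨s, rfl⟩ := hv
      obtain ⟨t, rfl⟩ := hw
      exact ⟨symmDiff s t, sum_symmDiff_of_charP_two x s t⟩
    | neg v _ hv => rwa [CharTwo.neg_eq]
  · rintro ⟨s, rfl⟩
    exact sum_mem fun i _ ↦ AddSubgroup.subset_closure (Set.mem_range_self i)

theorem injective_sum_of_sum_mem_nonZeroDivisors {x : κ → R}
    (hx : ∀ s : Finset κ, s.Nonempty → ∑ i ∈ s, x i ∈ R⁰) :
    Function.Injective fun s : Finset κ ↦ ∑ i ∈ s, x i := by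
  classical
  have : Nontrivial R := CharP.nontrivial_of_char_ne_one (v := 2) (by norm_num)
  intro s t (hst : ∑ i ∈ s, x i = ∑ i ∈ t, x i)
  by_contra hne
  refine nonZeroDivisors.ne_zero (hx (symmDiff s t) (symmDiff_nonempty.mpr hne)) ?_
  rw [sum_symmDiff_of_charP_two, hst, CharTwo.add_self_eq_zero]

theorem forall_comp_eq_iff_mem_adjoin_prod_subset_sums [Fintype κ] {x : κ → R}
    (hx : ∀ s : Finset κ, s.Nonempty → ∑ i ∈ s, x i ∈ R⁰) {p : R[X]} :
    (∀ i, p.comp (Polynomial.X - Polynomial.C (x i)) = p) ↔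
      p ∈ Algebra.adjoin R
        {∏ s : Finset κ, (Polynomial.X - ∑ i ∈ s, Polynomial.C (x i))} := by
  let V := AddSubgroup.closure (Set.range x)
  let subsetSum (s : Finset κ) : V := ⟨∑ i ∈ s, x i, mem_closure_range_iff_exists_sum.mpr ⟨s, rfl⟩⟩
  have hbij : Function.Bijective subsetSum := by
    refine ⟨fun s t hst ↦ ?_, ?_⟩
    · exact injective_sum_of_sum_mem_nonZeroDivisors hx (congrArg Subtype.val hst)
    · rintro ⟨v, hv⟩
      obtain ⟨s, hs⟩ := mem_closure_range_iff_exists_sum.mp hv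
      exact ⟨s, Subtype.ext hs⟩
  have : Fintype V := Fintype.ofBijective subsetSum hbij
  have hprod : ∏ s : Finset κ, (Polynomial.X - ∑ i ∈ s, Polynomial.C (x i)) =
      vanishingPolynomial V :=
    Fintype.prod_bijective subsetSum hbij _ _ fun s ↦ by simp [subsetSum]
  have hV : ∀ v ∈ V, v ≠ 0 → v ∈ R⁰ := by
    intro v hv hv0
    obtain ⟨s, rfl⟩ := mem_closure_range_iff_exists_sum.mp hv
    exact hx s (nonempty_of_sum_ne_zero hv0)
  rw [hprod, ← vanishingPolynomial.forall_comp_eq_iff_mem_adjoin hV,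
    forall_mem_closure_comp_eq_iff, Set.forall_mem_range]

end SubsetSums

theorem sum_X_mem_nonZeroDivisors {σ k : Type*} [CommRing k] {s : Finset σ} (hs : s.Nonempty) :
    ∑ i ∈ s, (X i : MvPolynomial σ k) ∈ (MvPolynomial σ k)⁰ := by
  classical
  obtain ⟨i, hi⟩ := hs
  let f : MvPolynomial σ k ≃ₐ[k] (MvPolynomial {j // j ≠ i} k)[X] :=
    (renameEquiv k (Equiv.optionSubtypeNe i).symm).trans (optionEquivLeft k _)
  have hfi : f (X i) = Polynomial.X := by simp [f]
  have hfj (j : σ) (hj : j ≠ i) : f (X j) = Polynomial.C (X ⟨j, hj⟩) := by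
    simp [f, Equiv.optionSubtypeNe_symm_of_ne hj]
  have hfs : f (∑ j ∈ s, X j) =
      Polynomial.X + Polynomial.C (∑ j ∈ (s.erase i).attach, X ⟨j, ne_of_mem_erase j.2⟩) := by
    rw [← add_sum_erase s _ hi, map_add, hfi, ← sum_attach, map_sum, map_sum]
    exact congrArg _ (sum_congr rfl fun j _ ↦ hfj j _)
  refine mem_nonZeroDivisors_of_injective f.injective ?_
  rw [hfs]
  exact (Polynomial.monic_X_add_C _).mem_nonZeroDivisors

theorem restrictScalars_adjoin_of_adjoin_eq_top {R A B : Type*} [CommSemiring R] [CommSemiring A]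
    [CommSemiring B] [Algebra R A] [Algebra A B] [Algebra R B] [IsScalarTower R A B] {s : Set A}
    (hs : Algebra.adjoin R s = ⊤) (t : Set B) :
    (Algebra.adjoin A t).restrictScalars R = Algebra.adjoin R (algebraMap A B '' s ∪ t) := by
  rw [Algebra.adjoin_algebraMap_image_union_eq_adjoin_adjoin, hs, Algebra.adjoin_top]
  rfl

/-- The ring `k[xᵢ (i ∈ ι), A] / (∑ xᵢ)`, with `xᵢ` encoded as `X (Sum.inl i)` and `A` as
`X (Sum.inr ())`. -/
abbrev SumZeroRing (ι k : Type*) [Fintype ι] [CommRing k] : Type _ :=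
  MvPolynomial (ι ⊕ Unit) k ⧸
    Ideal.span ({∑ i : ι, X (Sum.inl i)} : Set (MvPolynomial (ι ⊕ Unit) k))

namespace SumZeroRing

variable {ι k : Type*} [Fintype ι] [CommRing k]

/-- The class of `xᵢ`. -/
noncomputable def x (i : ι) : SumZeroRing ι k := Ideal.Quotient.mk _ (X (Sum.inl i))

variable (ι k) in
/-- The class of the variable `A`. -/
noncomputable def A : SumZeroRing ι k := Ideal.Quotient.mk _ (X (Sum.inr ()))

theorem sum_x : ∑ i, (x i : SumZeroRing ι k) = 0 := by
  simp only [x, ← map_sum]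
  exact Ideal.Quotient.eq_zero_iff_mem.mpr (Ideal.mem_span_singleton_self _)

theorem algHom_ext {B : Type*} [Semiring B] [Algebra k B] {f g : SumZeroRing ι k →ₐ[k] B}
    (hx : ∀ i, f (x i) = g (x i)) (hA : f (A ι k) = g (A ι k)) : f = g := by
  refine Ideal.Quotient.algHom_ext k (MvPolynomial.algHom_ext ?_)
  rintro (i | ⟨⟩)
  exacts [hx i, hA]

/-- The universal property: a `k`-algebra map out of `SumZeroRing ι k` amounts to a family `u`
with sum zero, the images of the `xᵢ`, and an element `a`, the image of `A`. -/
noncomputable def lift {B : Type*} [CommRing B] [Algebra k B] (u : ι → B) (hu : ∑ i, u i = 0)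
    (a : B) : SumZeroRing ι k →ₐ[k] B :=
  Ideal.Quotient.liftₐ _ (aeval (Sum.elim u fun _ ↦ a)) fun p hp ↦ by
    obtain ⟨q, rfl⟩ := Ideal.mem_span_singleton.mp hp
    simp [hu]

section Lift

variable {B : Type*} [CommRing B] [Algebra k B] (u : ι → B) (hu : ∑ i, u i = 0) (a : B)

@[simp]
theorem lift_x (i : ι) : lift (k := k) u hu a (x i) = u i :=
  aeval_X (Sum.elim u fun _ ↦ a) (Sum.inl i)

@[simp]
theorem lift_A : lift u hu a (A ι k) = a :=
  aeval_X (Sum.elim u fun _ ↦ a) (Sum.inr ())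

end Lift

variable [DecidableEq ι] (i₀ : ι)

variable (k) in
/-- The coordinates `xᵢ` after the variable `xᵢ₀` has been eliminated by means of
`xᵢ₀ = -∑_{i ≠ i₀} xᵢ`. -/
noncomputable def coord (i : ι) : MvPolynomial {i // i ≠ i₀} k :=
  if h : i = i₀ then -∑ j, X j else X ⟨i, h⟩

theorem coord_self : coord k i₀ i₀ = -∑ j, X j :=
  dif_pos rfl

theorem coord_of_ne {i : ι} (h : i ≠ i₀) : coord k i₀ i = X ⟨i, h⟩ :=
  dif_neg h

theorem sum_coord : ∑ i, coord k i₀ i = 0 := by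
  have h (j : {i // i ≠ i₀}) : coord k i₀ j = X j := coord_of_ne i₀ j.2
  simp_rw [Fintype.sum_eq_add_sum_subtype_ne _ i₀, h, coord_self, neg_add_cancel]

theorem adjoin_range_coord : Algebra.adjoin k (Set.range (coord k i₀)) = ⊤ := by
  rw [eq_top_iff, ← adjoin_range_X]
  refine Algebra.adjoin_mono ?_
  rintro _ ⟨i, rfl⟩
  exact ⟨i, coord_of_ne i₀ i.2⟩

variable (k) in
/-- Eliminating `xᵢ₀` identifies `SumZeroRing ι k` with the ring of polynomials in `A` over the
polynomial ring in the remaining `xᵢ`. -/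
noncomputable def equivPolynomial :
    SumZeroRing ι k ≃ₐ[k] (MvPolynomial {i // i ≠ i₀} k)[X] :=
  AlgEquiv.ofAlgHom
    (lift (fun i ↦ Polynomial.C (coord k i₀ i))
      (by rw [← map_sum, sum_coord, map_zero]) Polynomial.X)
    (Polynomial.aevalTower (aeval fun i : {i // i ≠ i₀} ↦ x i.1) (A ι k))
    (by
      refine Polynomial.algHom_ext' (MvPolynomial.algHom_ext fun i ↦ ?_) (by simp)
      simp [coord_of_ne i₀ i.2])
    (by
      refine algHom_ext (fun i ↦ ?_) (by simp)
      obtain rfl | hi := eq_or_ne i i₀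
      · have h := sum_x (ι := ι) (k := k)
        rw [Fintype.sum_eq_add_sum_subtype_ne _ i] at h
        simpa [coord_self] using (eq_neg_of_add_eq_zero_left h).symm
      · simp [coord_of_ne i₀ hi])

@[simp]
theorem equivPolynomial_x (i : ι) : equivPolynomial k i₀ (x i) = Polynomial.C (coord k i₀ i) :=
  lift_x _ (by rw [← map_sum, sum_coord, map_zero]) _ i

@[simp]
theorem equivPolynomial_A : equivPolynomial k i₀ (A ι k) = Polynomial.X :=
  lift_A _ (by rw [← map_sum, sum_coord, map_zero]) _

variable {i₀}

theorem equivPolynomial_translation {ψ : SumZeroRing ι k →ₐ[k] SumZeroRing ι k} {m : ι}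
    (hx : ∀ i, ψ (x i) = x i) (hA : ψ (A ι k) = A ι k - x m) (y : SumZeroRing ι k) :
    equivPolynomial k i₀ (ψ y) =
      (equivPolynomial k i₀ y).comp (Polynomial.X - Polynomial.C (coord k i₀ m)) := by
  let τ : (MvPolynomial {i // i ≠ i₀} k)[X] →ₐ[k] (MvPolynomial {i // i ≠ i₀} k)[X] :=
    (Polynomial.aeval (Polynomial.X - Polynomial.C (coord k i₀ m))).restrictScalars k
  have h : ((equivPolynomial k i₀).toAlgHom.comp ψ) = τ.comp (equivPolynomial k i₀).toAlgHom :=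
    algHom_ext (fun i ↦ by simp [τ, hx]) (by simp [τ, hA])
  exact DFunLike.congr_fun h y

variable (i₀) in
theorem mem_adjoin_insert_range_x_iff {y z : SumZeroRing ι k} :
    y ∈ Algebra.adjoin k (insert z (Set.range x)) ↔
      equivPolynomial k i₀ y ∈
        Algebra.adjoin (MvPolynomial {i // i ≠ i₀} k) {equivPolynomial k i₀ z} := by
  let f : SumZeroRing ι k →ₐ[k] (MvPolynomial {i // i ≠ i₀} k)[X] := (equivPolynomial k i₀).toAlgHom
  have himage : f '' insert z (Set.range x) =
      algebraMap _ _ '' Set.range (coord k i₀) ∪ {f z} := by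
    rw [Set.image_insert_eq, Set.union_singleton, ← Set.range_comp, ← Set.range_comp]
    congr! 2
    exact funext (equivPolynomial_x i₀)
  have hmap : (Algebra.adjoin k (insert z (Set.range x))).map f =
      (Algebra.adjoin (MvPolynomial {i // i ≠ i₀} k) {f z}).restrictScalars k := by
    rw [restrictScalars_adjoin_of_adjoin_eq_top (adjoin_range_coord i₀), ← himage,
      Algebra.adjoin_image]
  exact ((equivPolynomial k i₀).injective.mem_set_image).symm.trans (SetLike.ext_iff.mp hmap _)

theorem sum_coord_mem_nonZeroDivisors {s : Finset ι} (hs : s.Nonempty) (hi₀ : i₀ ∉ s) :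
    ∑ i ∈ s, coord k i₀ i ∈ (MvPolynomial {i // i ≠ i₀} k)⁰ := by
  have h : ∑ i ∈ s, coord k i₀ i = ∑ i ∈ s.subtype (· ≠ i₀), X i := by
    rw [← sum_subtype_of_mem _ fun i hi ↦ ne_of_mem_of_not_mem hi hi₀]
    exact sum_congr rfl fun i _ ↦ coord_of_ne i₀ i.2
  rw [h]
  refine sum_X_mem_nonZeroDivisors ?_
  obtain ⟨i, hi⟩ := hs
  exact ⟨⟨i, ne_of_mem_of_not_mem hi hi₀⟩, mem_subtype.mpr hi⟩

end SumZeroRing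

open SumZeroRing in
theorem invariants_of_Ej_action_general {k ι κ : Type*} [CommRing k] [CharP k 2] [Fintype ι]
    [Fintype κ] {e : κ → ι} (he : Function.Injective e) (hcard : Fintype.card κ < Fintype.card ι)
    (φ : κ → SumZeroRing ι k →ₐ[k] SumZeroRing ι k)
    (hφx : ∀ i m, φ i (x m) = x m) (hφA : ∀ i, φ i (A ι k) = A ι k - x (e i))
    (y : SumZeroRing ι k) :
    (∀ i, φ i y = y) ↔
      y ∈ Algebra.adjoin k
        (insert (∏ s : Finset κ, (A ι k - ∑ i ∈ s, x (e i))) (Set.range x)) := by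
  classical
  obtain ⟨i₀, hi₀⟩ : ∃ i₀, ∀ i, e i ≠ i₀ := by
    have he' : ¬ Function.Surjective e := fun h ↦
      hcard.not_ge (Fintype.card_le_of_surjective e h)
    simpa [Function.Surjective] using he'
  have hreg (s : Finset κ) (hs : s.Nonempty) :
      ∑ i ∈ s, coord k i₀ (e i) ∈ (MvPolynomial {i // i ≠ i₀} k)⁰ := by
    have h := sum_coord_mem_nonZeroDivisors (k := k) (hs.map (f := ⟨e, he⟩)) (i₀ := i₀)
      (by simpa using fun i _ ↦ hi₀ i)
    rwa [sum_map] at h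
  have hφ (i : κ) : φ i y = y ↔ (equivPolynomial k i₀ y).comp
      (Polynomial.X - Polynomial.C (coord k i₀ (e i))) = equivPolynomial k i₀ y := by
    rw [← equivPolynomial_translation (hφx i) (hφA i), (equivPolynomial k i₀).injective.eq_iff]
  simp_rw [hφ, mem_adjoin_insert_range_x_iff i₀,
    forall_comp_eq_iff_mem_adjoin_prod_subset_sums hreg, map_prod, map_sub, map_sum,
    equivPolynomial_A, equivPolynomial_x]

/-- Let `k` be a field of characteristic 2, `r ≥ 1` and
`1 ≤ j ≤ r−1`. In `S = k[x₁,…,x_r,A]/(x₁+⋯+x_r)`, let `E_j = (ℤ/2)^j` act with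
generator `ε_i` fixing every `x_m` and sending `A ↦ A − x_i` (the induced maps on
the quotient being encoded by the family `φ`). Then the ring of `E_j`-invariants
of `S` is `k[x₁,…,x_r,η_j]/(x₁+⋯+x_r)`, where
`η_j = ∏_{I ⊆ {1,…,j}} (A − ∑_{i∈I} x_i)`. Here `Sum.inl m` indexes `x_{m+1}`
and `Sum.inr ()` indexes `A`. -/
theorem invariants_of_Ej_action
    (k : Type*) [Field k] [CharP k 2] (r j : ℕ) (hj : 1 ≤ j) (hjr : j ≤ r - 1)
    (I : Ideal (MvPolynomial (Fin r ⊕ Unit) k))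
    (hI : I = Ideal.span ({∑ i : Fin r, X (Sum.inl i)} : Set (MvPolynomial (Fin r ⊕ Unit) k)))
    (φ : Fin j → ((MvPolynomial (Fin r ⊕ Unit) k ⧸ I) →ₐ[k] (MvPolynomial (Fin r ⊕ Unit) k ⧸ I)))
    (hφ : ∀ (i : Fin j) (f : MvPolynomial (Fin r ⊕ Unit) k),
      φ i (Ideal.Quotient.mk I f) =
        Ideal.Quotient.mk I
          (MvPolynomial.aeval (R := k)
            (fun v : Fin r ⊕ Unit =>
              match v with
              | Sum.inl m => X (Sum.inl m)
              | Sum.inr _ =>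
                  X (Sum.inr ()) -
                    X (Sum.inl (Fin.castLE (le_trans hjr (Nat.sub_le r 1)) i)))
            f))
    (η : MvPolynomial (Fin r ⊕ Unit) k)
    (hη : η = ∏ s ∈ (Finset.univ : Finset (Fin j)).powerset,
        (X (Sum.inr ()) -
          ∑ i ∈ s, X (Sum.inl (Fin.castLE (le_trans hjr (Nat.sub_le r 1)) i)))) :
    ∀ y : MvPolynomial (Fin r ⊕ Unit) k ⧸ I,
      (∀ i : Fin j, φ i y = y) ↔
        y ∈ Algebra.adjoin k
          (insert (Ideal.Quotient.mk I η)
            (Set.range fun m : Fin r => Ideal.Quotient.mk I (X (Sum.inl m)))) := by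
  subst hI hη
  simp only [powerset_univ, map_prod, map_sub, map_sum]
  exact invariants_of_Ej_action_general (Fin.castLE_injective _)
    (by rw [Fintype.card_fin, Fintype.card_fin]; omega) φ
    (fun i m ↦ (hφ i _).trans (by rw [aeval_X]; rfl))
    (fun i ↦ (hφ i _).trans (by rw [aeval_X, map_sub]; rfl))
end
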